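/- arXiv:1504.06970 — 3 statements merged into one kernel-verified Lean document; each statement's English description precedes it below -/
import Mathlib

section
/- (Velleman–Call) The Fubini numbers F_n = Σ_{k=0}^{n} Surj(n,k) satisfy the asymptotic F_n ~ (1/(2 log 2)) · n! / (log 2)^n as n → ∞; that is, F_n · (log 2)^n · (2 log 2) / n! tends to 1. -/
/-- The number of surjective functions from `Fin n` onto `Fin k`
(the ordered Stirling number `k! * S(n,k)`). -/
def Surj (n k : ℕ) : ℕ :=
  Fintype.card {f : Fin n → Fin k // Function.Surjective f}

/-- The `n`-th Fubini number (ordered Bell number):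
the number of ordered set partitions of an `n`-element set. -/
def Fubini (n : ℕ) : ℕ :=
  ∑ k ∈ Finset.range (n + 1), Surj n k

/-!
With `x = log 2`, the numbers `u n = Fubini n * x ^ n / n!` satisfy the renewal equation of the
probability distribution giving weight `x ^ k / k!` to each `k ≥ 1`: split off one block of an
ordered set partition, and use `exp x - 1 = 1`. Its mean is `μ = x * exp x = 2 * log 2`, so `u n`
should tend to `μ⁻¹`, and since `μ < 2` the renewal theorem is elementary. Indeed the generating
function of the tails of the distribution starts with `1` and its other coefficients have sum
`μ - 1 < 1`, so its inverse, whose partial sums of coefficients are the `u n`, converges absolutely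
at `1`, with value `μ⁻¹`.
-/

open Filter Finset PowerSeries Topology
open scoped Nat

section Convolution

theorem sum_range_sum_antidiagonal_mul_le {R : Type*} [Semiring R] [PartialOrder R]
    [IsOrderedRing R] {a b : ℕ → R} (ha : ∀ n, 0 ≤ a n) (hb : ∀ n, 0 ≤ b n) (N : ℕ) :
    ∑ n ∈ range N, ∑ ij ∈ antidiagonal n, a ij.1 * b ij.2 ≤
      (∑ n ∈ range N, a n) * ∑ n ∈ range N, b n := by
  simp only [Nat.sum_antidiagonal_eq_sum_range_succ_mk]
  rw [sum_range_diag_flip N fun i j => a i * b j, sum_mul]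
  refine sum_le_sum fun i _ => ?_
  rw [← mul_sum]
  have hsub : range (N - i) ⊆ range N := range_subset_range.2 (Nat.sub_le N i)
  exact mul_le_mul_of_nonneg_left (sum_le_sum_of_subset_of_nonneg hsub fun j _ _ => hb j) (ha i)

theorem summable_norm_of_succ_eq_sum_antidiagonal {R : Type*} [NonUnitalSeminormedRing R]
    {a b : ℕ → R} (ha : Summable fun n => ‖a n‖) (ha1 : ∑' n, ‖a n‖ < 1)
    (hb : ∀ n, b (n + 1) = ∑ ij ∈ antidiagonal n, a ij.1 * b ij.2) :
    Summable fun n => ‖b n‖ := by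
  set q := ∑' n, ‖a n‖
  refine summable_of_sum_range_le (c := ‖b 0‖ / (1 - q)) (fun n => norm_nonneg _) fun N => ?_
  rw [le_div_iff₀ (sub_pos.2 ha1)]
  have hstep : ∑ n ∈ range N, ‖b n‖ ≤ q * ∑ n ∈ range N, ‖b n‖ + ‖b 0‖ := calc
    _ ≤ ∑ n ∈ range (N + 1), ‖b n‖ :=
      sum_le_sum_of_subset_of_nonneg (range_mono N.le_succ) fun n _ _ => norm_nonneg _
    _ = ∑ n ∈ range N, ‖∑ ij ∈ antidiagonal n, a ij.1 * b ij.2‖ + ‖b 0‖ := by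
      simp only [sum_range_succ', hb]
    _ ≤ ∑ n ∈ range N, ∑ ij ∈ antidiagonal n, ‖a ij.1‖ * ‖b ij.2‖ + ‖b 0‖ := by
      gcongr
      exact norm_sum_le_of_le _ fun ij _ => norm_mul_le _ _
    _ ≤ (∑ n ∈ range N, ‖a n‖) * ∑ n ∈ range N, ‖b n‖ + ‖b 0‖ := by
      gcongr
      exact sum_range_sum_antidiagonal_mul_le (fun n => norm_nonneg _) (fun n => norm_nonneg _) N
    _ ≤ q * ∑ n ∈ range N, ‖b n‖ + ‖b 0‖ := by
      gcongr
      exact ha.sum_le_tsum _ fun n _ => norm_nonneg _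
  linarith

theorem hasSum_coeff_of_mul_eq_one {𝕜 : Type*} [NormedDivisionRing 𝕜] [CompleteSpace 𝕜]
    {f g : 𝕜⟦X⟧} (hfg : f * g = 1) (hf0 : constantCoeff f = 1)
    (hf : Summable fun n => ‖coeff (n + 1) f‖) (hf1 : ∑' n, ‖coeff (n + 1) f‖ < 1) :
    HasSum (fun n => coeff n g) (∑' n, coeff n f)⁻¹ := by
  have hrec (n : ℕ) :
      coeff (n + 1) g = ∑ ij ∈ antidiagonal n, -coeff (ij.1 + 1) f * coeff ij.2 g := by
    have h := congrArg (coeff (n + 1)) hfg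
    rw [coeff_mul, Nat.sum_antidiagonal_succ, coeff_zero_eq_constantCoeff_apply, hf0, one_mul,
      coeff_one, if_neg n.succ_ne_zero] at h
    simpa only [neg_mul, sum_neg_distrib] using eq_neg_of_add_eq_zero_left h
  have hg : Summable fun n => ‖coeff n g‖ :=
    summable_norm_of_succ_eq_sum_antidiagonal (a := fun n => -coeff (n + 1) f)
      (by simpa only [norm_neg] using hf) (by simpa only [norm_neg] using hf1) hrec
  have hf' : Summable fun n => ‖coeff n f‖ :=
    (summable_nat_add_iff (f := fun n => ‖coeff n f‖) 1).1 hf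
  have hmul : (∑' n, coeff n f) * ∑' n, coeff n g = 1 := by
    rw [tsum_mul_tsum_eq_tsum_sum_antidiagonal_of_summable_norm hf' hg]
    simp only [← coeff_mul, hfg, coeff_one, tsum_ite_eq]
  rw [← eq_inv_of_mul_eq_one_right hmul]
  exact hg.of_norm.hasSum

theorem tendsto_coeff_of_mul_one_sub_X {R : Type*} [Ring R] [TopologicalSpace R]
    {f : R⟦X⟧} {s : R} (h : HasSum (fun n => coeff n (f * (1 - X))) s) :
    Tendsto (fun n => coeff n f) atTop (𝓝 s) := by
  have hpartial (n : ℕ) : ∑ k ∈ range (n + 1), coeff k (f * (1 - X)) = coeff n f := by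
    induction n with
    | zero => simp
    | succ n ih => rw [sum_range_succ, ih, mul_sub, mul_one, map_sub, coeff_succ_mul_X,
        add_sub_cancel]
  exact ((tendsto_add_atTop_iff_nat 1).2 h.tendsto_sum_nat).congr hpartial

end Convolution

section Renewal

theorem hasSum_tsum_nat_add {E : Type*} [NormedAddCommGroup E] [CompleteSpace E] {f : ℕ → E} {s : E}
    (hf : Summable fun n => (n + 1) * ‖f n‖) (hs : HasSum (fun n => (n + 1) • f n) s) :
    HasSum (fun k => ∑' i, f (i + k)) s := by
  have hsigma : Summable fun x : Σ n, antidiagonal n => f x.1 := by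
    refine .of_norm <| (summable_sigma_of_nonneg fun _ => norm_nonneg _).2
      ⟨fun n => .of_finite, ?_⟩
    simpa using hf
  have hfiber (n : ℕ) : HasSum (fun _ : antidiagonal n => f n) ((n + 1) • f n) := by
    simpa using hasSum_fintype fun _ : antidiagonal n => f n
  have hprod : HasSum (fun ij : ℕ × ℕ => f (ij.1 + ij.2)) s :=
    HasAntidiagonal.sigmaAntidiagonalEquivProd.symm.hasSum_iff.2
      (hs.sigma_of_hasSum hfiber hsigma)
  refine hprod.prod_fiberwise fun k => ?_
  simpa only [add_comm k] using (hprod.summable.prod_factor k).hasSum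

theorem mk_tsum_nat_add_mul_one_sub_X {R : Type*} [Ring R] [TopologicalSpace R]
    [IsTopologicalAddGroup R] [T2Space R] {f : ℕ → R} (hf : Summable f) :
    PowerSeries.mk (fun k => ∑' i, f (i + k)) * (1 - X) =
      C (∑' i, f i) - PowerSeries.mk f * X := by
  ext n
  cases n with
  | zero => simp
  | succ n =>
    have h := ((summable_nat_add_iff n).2 hf).tsum_eq_zero_add
    simp only [zero_add, add_right_comm _ 1 n] at h
    simp [mul_sub, coeff_succ_mul_X, h, add_assoc]

theorem mk_mul_one_sub_mk_mul_X_eq_one {R : Type*} [Ring R] {p u : ℕ → R} (hu0 : u 0 = 1)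
    (hu : ∀ n, u (n + 1) = ∑ k ∈ range (n + 1), u k * p (n - k)) :
    PowerSeries.mk u * (1 - PowerSeries.mk p * X) = 1 := by
  ext n
  cases n with
  | zero => simp [hu0]
  | succ n =>
    rw [mul_sub, mul_one, map_sub, ← mul_assoc, coeff_succ_mul_X, coeff_mul,
      Nat.sum_antidiagonal_eq_sum_range_succ_mk]
    simp [hu, coeff_one]

/-- `p n` is the weight at `n + 1` of a probability distribution on the positive integers. -/
theorem tendsto_of_renewal_of_mean_lt_two {p u : ℕ → ℝ} {μ : ℝ} (hp0 : ∀ n, 0 ≤ p n)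
    (hp : HasSum p 1) (hμ : HasSum (fun n => (n + 1) * p n) μ) (hμ2 : μ < 2) (hu0 : u 0 = 1)
    (hu : ∀ n, u (n + 1) = ∑ k ∈ range (n + 1), u k * p (n - k)) :
    Tendsto u atTop (𝓝 μ⁻¹) := by
  let r : ℕ → ℝ := fun k => ∑' i, p (i + k)
  have hr0 : r 0 = 1 := hp.tsum_eq
  have hr_nonneg (k : ℕ) : 0 ≤ r k := tsum_nonneg fun i => hp0 (i + k)
  have hr : HasSum r μ :=
    hasSum_tsum_nat_add (by simpa only [Real.norm_of_nonneg (hp0 _)] using hμ.summable)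
      (by simpa using hμ)
  have hr_succ : HasSum (fun k => ‖r (k + 1)‖) (μ - 1) := by
    simpa [Real.norm_of_nonneg (hr_nonneg _), hr0] using (hasSum_nat_add_iff' 1).2 hr
  have hinv : PowerSeries.mk r * (PowerSeries.mk u * (1 - X)) = 1 := by
    rw [mul_left_comm, mk_tsum_nat_add_mul_one_sub_X hp.summable, hp.tsum_eq, map_one,
      mk_mul_one_sub_mk_mul_X_eq_one hu0 hu]
  have hsum := hasSum_coeff_of_mul_eq_one hinv (by simpa using hr0)
    (by simpa using hr_succ.summable) (by simp only [coeff_mk, hr_succ.tsum_eq]; linarith)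
  simpa only [coeff_mk, hr.tsum_eq] using tendsto_coeff_of_mul_one_sub_X hsum

end Renewal

section Surjections

theorem sum_ssubsets_apply_card {α M : Type*} [DecidableEq α] [AddCancelCommMonoid M]
    (f : ℕ → M) (s : Finset α) :
    ∑ t ∈ s.ssubsets, f #t = ∑ j ∈ range #s, (#s).choose j • f j := by
  have h := sum_powerset_apply_card f (x := s)
  rw [← sum_erase_add _ _ (mem_powerset_self s), sum_range_succ, Nat.choose_self, one_smul] at h
  exact add_right_cancel h

variable (α β : Type*) [Fintype α] [Fintype β] [DecidableEq α] [DecidableEq β]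

theorem card_surjective_eq_surj :
    Fintype.card {f : α → β // Function.Surjective f} = Surj (Fintype.card α) (Fintype.card β) :=
  Fintype.card_congr <| ((Fintype.equivFin α).arrowCongr (Fintype.equivFin β)).subtypeEquiv
    fun f => by simp [Equiv.arrowCongr]

variable {α} in
theorem card_surjective_option_isSome_iff_mem {t : Finset α} (ht : t ≠ univ) :
    Fintype.card {f : α → Option β // Function.Surjective f ∧ ∀ a, (f a).isSome ↔ a ∈ t} =
      Surj #t (Fintype.card β) := by
  rw [← Fintype.card_coe t, ← card_surjective_eq_surj]
  refine Fintype.card_congr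
    { toFun f := ⟨fun a => (f.1 a).get ((f.2.2 a).2 a.2), fun b => ?_⟩
      invFun g := ⟨fun a => if h : a ∈ t then some (g.1 ⟨a, h⟩) else none, ?_, fun a => ?_⟩
      left_inv f := ?_
      right_inv g := by simp }
  · obtain ⟨a, ha⟩ := f.2.1 (some b)
    exact ⟨⟨a, (f.2.2 a).1 (by simp [ha])⟩, by simp [ha]⟩
  · rintro (_ | b)
    · obtain ⟨a, ha⟩ : ∃ a, a ∉ t := by simpa [eq_univ_iff_forall] using ht
      exact ⟨a, dif_neg ha⟩
    · obtain ⟨a, rfl⟩ := g.2 b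
      exact ⟨a, dif_pos a.2⟩
  · by_cases h : a ∈ t <;> simp [h]
  · ext1
    funext a
    by_cases h : a ∈ t
    · simp [h]
    · have hnone : f.1 a = none := by simpa using (f.2.2 a).not.2 h
      simp [h, hnone]

theorem card_surjective_option :
    Fintype.card {f : α → Option β // Function.Surjective f} =
      ∑ t ∈ (univ : Finset α).ssubsets, Surj #t (Fintype.card β) := by
  let supp : (α → Option β) → Finset α := fun f => {a | (f a).isSome}
  have hsupp : Set.MapsTo supp ({f | Function.Surjective f} : Finset (α → Option β))
      (univ : Finset α).ssubsets := by
    intro f hf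
    obtain ⟨a, ha⟩ := (mem_filter_univ f).1 hf none
    refine mem_ssubsets.2 (ssubset_univ_iff.2 fun h => ?_)
    simpa [supp, ha] using h.ge (mem_univ a)
  rw [Fintype.card_subtype, card_eq_sum_card_fiberwise hsupp]
  refine sum_congr rfl fun t ht => ?_
  rw [← card_surjective_option_isSome_iff_mem β (ssubset_univ_iff.1 (mem_ssubsets.1 ht)),
    Fintype.card_subtype, filter_filter]
  simp only [supp, Finset.ext_iff, mem_filter_univ]

theorem surj_succ_right (n k : ℕ) :
    Surj n (k + 1) = ∑ j ∈ range n, n.choose j * Surj j k := by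
  have h := card_surjective_eq_surj (Fin n) (Option (Fin k))
  rw [card_surjective_option, sum_ssubsets_apply_card (Surj · _)] at h
  simpa using h.symm

theorem surj_eq_zero_of_lt {n k : ℕ} (h : n < k) : Surj n k = 0 := by
  refine Fintype.card_eq_zero_iff.2 ⟨fun f => h.not_ge ?_⟩
  simpa using Fintype.card_le_of_surjective f.1 f.2

theorem surj_succ_zero (n : ℕ) : Surj (n + 1) 0 = 0 :=
  Fintype.card_eq_zero_iff.2 ⟨fun f => (f.1 0).elim0⟩

end Surjections

section Recurrence

theorem fubini_eq_sum_range_surj {n N : ℕ} (h : n < N) : Fubini n = ∑ k ∈ range N, Surj n k :=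
  sum_subset (range_subset_range.2 h) fun k _ hk =>
    surj_eq_zero_of_lt (by simpa [Nat.succ_le_iff] using hk)

theorem fubini_zero : Fubini 0 = 1 := by
  decide

theorem fubini_succ (n : ℕ) :
    Fubini (n + 1) = ∑ j ∈ range (n + 1), (n + 1).choose j * Fubini j := by
  rw [Fubini, sum_range_succ', surj_succ_zero, add_zero]
  simp only [surj_succ_right]
  rw [sum_comm]
  refine sum_congr rfl fun j hj => ?_
  rw [← mul_sum, fubini_eq_sum_range_surj (mem_range.1 hj)]

theorem fubini_succ_mul_pow_div_factorial {K : Type*} [Field K] [CharZero K] (x : K) (n : ℕ) :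
    Fubini (n + 1) * x ^ (n + 1) / (n + 1)! =
      ∑ k ∈ range (n + 1), Fubini k * x ^ k / k ! * (x ^ (n - k + 1) / (n - k + 1)!) := by
  rw [fubini_succ, Nat.cast_sum, sum_mul, sum_div]
  refine sum_congr rfl fun k hk => ?_
  have hk : k ≤ n := Nat.lt_succ_iff.1 (mem_range.1 hk)
  have hfac (m : ℕ) : (m ! : K) ≠ 0 := Nat.cast_ne_zero.2 m.factorial_ne_zero
  rw [Nat.cast_mul, Nat.cast_choose K (hk.trans n.le_succ), ← Nat.sub_add_comm hk]
  have hpow : x ^ (n + 1) = x ^ k * x ^ (n + 1 - k) := by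
    rw [← pow_add, Nat.add_sub_cancel' (hk.trans n.le_succ)]
  rw [hpow]
  field_simp [hfac]

end Recurrence

section Exponential

theorem hasSum_pow_succ_div_factorial_succ (x : ℝ) :
    HasSum (fun n : ℕ => x ^ (n + 1) / (n + 1)!) (Real.exp x - 1) := by
  have h := NormedSpace.expSeries_div_hasSum_exp x
  rw [← Real.exp_eq_exp_ℝ] at h
  simpa using (hasSum_nat_add_iff' 1).2 h

theorem hasSum_succ_mul_pow_succ_div_factorial_succ (x : ℝ) :
    HasSum (fun n : ℕ => (n + 1) * (x ^ (n + 1) / (n + 1)!)) (x * Real.exp x) := by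
  have h := (NormedSpace.expSeries_div_hasSum_exp x).mul_left x
  rw [← Real.exp_eq_exp_ℝ] at h
  refine h.congr_fun fun n => ?_
  rw [Nat.factorial_succ]
  push_cast
  field_simp
  ring

end Exponential

/-- (Velleman–Call) `Fₙ ∼ (1/(2 log 2)) · n! / (log 2)ⁿ` as `n → ∞`. -/
theorem fubini_asymptotic :
    Filter.Tendsto
      (fun n : ℕ => (Fubini n : ℝ) * (Real.log 2) ^ n * (2 * Real.log 2) / (n.factorial : ℝ))
      Filter.atTop (nhds 1) := by
  have hlog : 0 < Real.log 2 := Real.log_pos one_lt_two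
  have hweight : HasSum (fun n : ℕ => Real.log 2 ^ (n + 1) / (n + 1)!) 1 := by
    have h := hasSum_pow_succ_div_factorial_succ (Real.log 2)
    rwa [Real.exp_log two_pos, show (2 : ℝ) - 1 = 1 by norm_num] at h
  have hmean : HasSum (fun n : ℕ => (n + 1) * (Real.log 2 ^ (n + 1) / (n + 1)!))
      (2 * Real.log 2) := by
    have h := hasSum_succ_mul_pow_succ_div_factorial_succ (Real.log 2)
    rwa [Real.exp_log two_pos, mul_comm _ (2 : ℝ)] at h
  have hlimit : Tendsto (fun n : ℕ => Fubini n * Real.log 2 ^ n / n !) atTop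
      (𝓝 (2 * Real.log 2)⁻¹) :=
    tendsto_of_renewal_of_mean_lt_two (fun n => by positivity) hweight hmean
      (by linarith [Real.log_two_lt_d9]) (by simp [fubini_zero])
      (fubini_succ_mul_pow_div_factorial (Real.log 2))
  have h := hlimit.mul_const (2 * Real.log 2)
  rw [inv_mul_cancel₀ (by positivity)] at h
  exact h.congr fun n => div_mul_eq_mul_div _ _ _
end

section
/- For every r ≥ 0, every n ≥ 2 and every k with 2 ≤ k ≤ n - 1, the ordered r-Stirling numbers satisfy the strict log-concavity inequality OS_r(n,k)^2 > OS_r(n,k-1) · OS_r(n,k+1). -/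
open Polynomial

/-- The ordered `r`-Stirling number `(k+r)! · S_r(n,k)`: the number of surjections
`f : Fin (r+n) → Fin (r+k)` whose restriction to the first `r` elements is injective. -/
def OS (r n k : ℕ) : ℕ :=
  Fintype.card {f : Fin (r + n) → Fin (r + k) //
    Function.Surjective f ∧ Function.Injective (fun i : Fin r => f (Fin.castAdd n i))}

/-- The `r`-Fubini polynomial `F_{n,r}(x) = ∑_{k=1}^n OS_r(n,k) xᵏ` for `n ≥ 1`,
with `F_{0,r}(x) = r!`. -/
noncomputable def rFubiniPoly (r n : ℕ) : Polynomial ℝ :=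
  if n = 0 then Polynomial.C (r.factorial : ℝ)
  else ∑ k ∈ Finset.Icc 1 n, Polynomial.C ((OS r n k : ℝ)) * Polynomial.X ^ k

/-!
Deleting the last point of the domain of a counted map gives the recurrence
`OS_r(n+1,k) = (r + k) (OS_r(n,k) + OS_r(n,k-1))`. Adding adjacent terms preserves log-concavity,
and multiplying by the strictly log-concave weights `r + k` then makes it strict.
-/

section LogConcave

variable {R : Type*}

/-- Log-concavity of a sequence, in the strong form of total positivity of order two. For
nonnegative real sequences without internal zeros, it is equivalent to its diagonal case
`a i * a (i + 2) ≤ a (i + 1) ^ 2`. -/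
def LogConcave [Mul R] [LE R] (a : ℕ → R) : Prop :=
  ∀ ⦃i j : ℕ⦄, i ≤ j → a i * a (j + 1) ≤ a (i + 1) * a j

/-- The sequence of coefficients of `(1 + X) * ∑ k, a k * X ^ k`, that is, of the sums
`a k + a (k - 1)` with `a (-1)` read as `0`. -/
def adjacentSum [Add R] (a : ℕ → R) : ℕ → R
  | 0 => a 0
  | k + 1 => a (k + 1) + a k

variable [CommSemiring R] [PartialOrder R] {a b : ℕ → R}

theorem LogConcave.mul_add_two_le (ha : LogConcave a) {i j : ℕ} (hij : i ≤ j) :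
    a i * a (j + 2) ≤ a (i + 2) * a j := by
  rcases hij.eq_or_lt with rfl | hlt
  · exact (mul_comm _ _).le
  · exact (ha (by omega : i ≤ j + 1)).trans (ha hlt)

variable [IsOrderedRing R]

theorem LogConcave.mul (ha : LogConcave a) (hb : LogConcave b) (ha₀ : 0 ≤ a) (hb₀ : 0 ≤ b) :
    LogConcave (a * b) := by
  intro i j hij
  calc (a * b) i * (a * b) (j + 1) = (a i * a (j + 1)) * (b i * b (j + 1)) :=
        mul_mul_mul_comm _ _ _ _
    _ ≤ (a (i + 1) * a j) * (b (i + 1) * b j) :=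
        mul_le_mul (ha hij) (hb hij) (mul_nonneg (hb₀ _) (hb₀ _)) (mul_nonneg (ha₀ _) (ha₀ _))
    _ = (a * b) (i + 1) * (a * b) j := mul_mul_mul_comm _ _ _ _

theorem LogConcave.adjacentSum (ha : LogConcave a) (ha₀ : 0 ≤ a) : LogConcave (adjacentSum a) := by
  rintro (_ | i) (_ | j) hij
  · exact (mul_comm _ _).le
  · calc a 0 * (a (j + 2) + a (j + 1)) = a 0 * a (j + 2) + a 0 * a (j + 1) := mul_add _ _ _
      _ ≤ a 1 * a (j + 1) + a 0 * a (j + 1) := by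
          gcongr ?_ + _
          exact ha (Nat.zero_le _)
      _ ≤ a 1 * a (j + 1) + a 0 * a (j + 1) + (a 1 + a 0) * a j :=
          le_add_of_nonneg_right (mul_nonneg (add_nonneg (ha₀ _) (ha₀ _)) (ha₀ _))
      _ = (a 1 + a 0) * (a (j + 1) + a j) := by ring
  · omega
  · have hij' : i ≤ j := Nat.le_of_succ_le_succ hij
    calc (a (i + 1) + a i) * (a (j + 2) + a (j + 1))
        = a (i + 1) * a (j + 2) + a i * a (j + 2) + a i * a (j + 1) + a (i + 1) * a (j + 1) := by
          ring
      _ ≤ a (i + 2) * a (j + 1) + a (i + 2) * a j + a (i + 1) * a j + a (i + 1) * a (j + 1) := by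
          gcongr ?_ + ?_ + ?_ + _
          exacts [ha hij, ha.mul_add_two_le hij', ha hij']
      _ = (a (i + 2) + a (i + 1)) * (a (j + 1) + a j) := by ring

theorem logConcave_const_add_natCast (c : R) : LogConcave fun k : ℕ => c + k := by
  intro i j hij
  calc (c + i) * (c + (j + 1 : ℕ)) = (c + i) * (c + j) + (c + i) := by push_cast; ring
    _ ≤ (c + i) * (c + j) + (c + j) := by gcongr
    _ = (c + (i + 1 : ℕ)) * (c + j) := by push_cast; ring

end LogConcave

section Recurrence

variable {r n k : ℕ} {β γ : Type*}

/-- The maps with image exactly `s` that are injective on the first `r` points. Prescribing the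
image keeps the codomain fixed when a value is removed. -/
def mapsOnto (r n : ℕ) (s : Set β) : Set (Fin (r + n) → β) :=
  {f | Set.range f = s ∧ Function.Injective fun i : Fin r => f (Fin.castAdd n i)}

theorem OS_eq_ncard_mapsOnto (r n k : ℕ) :
    OS r n k = (mapsOnto r n (Set.univ : Set (Fin (r + k)))).ncard := by
  simp only [OS, mapsOnto, ← Nat.card_eq_fintype_card, ← Set.range_eq_univ]
  rfl

theorem image_comp_mapsOnto {e : β → γ} (he : Function.Injective e) (s : Set β) :
    (e ∘ ·) '' mapsOnto r n s = mapsOnto r n (e '' s) := by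
  ext f
  constructor
  · rintro ⟨g, ⟨rfl, hg⟩, rfl⟩
    exact ⟨Set.range_comp e g, he.comp hg⟩
  · rintro ⟨hrange, hf⟩
    have hlift : ∀ i, ∃ x, e x = f i := fun i => by
      obtain ⟨x, -, hx⟩ := hrange.subset (Set.mem_range_self i)
      exact ⟨x, hx⟩
    choose g hg using hlift
    obtain rfl : e ∘ g = f := funext hg
    exact ⟨g, ⟨he.image_injective ((Set.range_comp e g).symm.trans hrange), hf.of_comp⟩, rfl⟩

theorem ncard_mapsOnto_compl_singleton (v : Fin (r + k + 1)) :
    (mapsOnto r n ({v}ᶜ : Set (Fin (r + k + 1)))).ncard = OS r n k := by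
  have hv : Function.Injective v.succAbove := Fin.succAbove_right_injective
  rw [← Fin.range_succAbove, ← Set.image_univ, ← image_comp_mapsOnto hv,
    Set.ncard_image_of_injective _ hv.comp_left, OS_eq_ncard_mapsOnto]

theorem mapsOnto_eq_empty_of_ncard_lt {s : Set β} (hs : s.ncard < r) : mapsOnto r n s = ∅ := by
  refine Set.eq_empty_of_forall_notMem ?_
  rintro f ⟨rfl, hf⟩
  refine hs.not_ge ?_
  calc r = (Set.range fun i : Fin r => f (Fin.castAdd n i)).ncard := by
        rw [← Set.image_univ, Set.ncard_image_of_injective _ hf, Set.ncard_univ, Nat.card_fin]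
    _ ≤ (Set.range f).ncard := Set.ncard_le_ncard (Set.range_comp_subset_range _ f)

theorem insert_eq_univ_iff {s : Set β} {v : β} :
    insert v s = Set.univ ↔ s = Set.univ ∨ s = {v}ᶜ := by
  rw [Set.insert_eq, ← Set.compl_subset_iff_union]
  exact (Set.isCoatom_singleton_compl v).le_iff

theorem snoc_mem_mapsOnto_univ {g : Fin (r + n) → β} {v : β} :
    (Fin.snoc g v : Fin (r + (n + 1)) → β) ∈ mapsOnto r (n + 1) Set.univ ↔
      g ∈ mapsOnto r n Set.univ ∪ mapsOnto r n {v}ᶜ := by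
  have hrange : Set.range (Fin.snoc g v : Fin (r + n + 1) → β) = Set.univ ↔
      Set.range g = Set.univ ∨ Set.range g = {v}ᶜ := by
    rw [Fin.range_snoc, insert_eq_univ_iff]
  have hinj : (Function.Injective fun i : Fin r =>
        (Fin.snoc g v : Fin (r + n + 1) → β) (Fin.castAdd n i).castSucc) ↔
      Function.Injective fun i : Fin r => g (Fin.castAdd n i) := by
    simp only [Fin.snoc_castSucc]
  exact (and_congr hrange hinj).trans or_and_right

theorem disjoint_mapsOnto {s t : Set β} (hst : s ≠ t) :
    Disjoint (mapsOnto r n s) (mapsOnto r n t) :=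
  Set.disjoint_left.2 fun _ hs ht => hst (hs.1.symm.trans ht.1)

theorem ncard_eq_sum_ncard_snoc [Fintype β] (S : Set (Fin (n + 1) → β)) :
    S.ncard = ∑ v : β, {g : Fin n → β | (Fin.snoc g v : Fin (n + 1) → β) ∈ S}.ncard := by
  let P (v : β) (g : Fin n → β) : Prop := (Fin.snoc g v : Fin (n + 1) → β) ∈ S
  have e : {p : β × (Fin n → β) // P p.1 p.2} ≃ S :=
    (Fin.snocEquiv fun _ => β).subtypeEquiv fun _ => Iff.rfl
  calc S.ncard = Nat.card (Σ v : β, {g : Fin n → β // P v g}) :=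
        Nat.card_congr (e.symm.trans (Equiv.subtypeProdEquivSigmaSubtype P))
    _ = ∑ v : β, Nat.card {g : Fin n → β // P v g} := Nat.card_sigma

theorem ncard_mapsOnto_succ_univ [Fintype β] :
    (mapsOnto r (n + 1) (Set.univ : Set β)).ncard =
      ∑ v : β, ((mapsOnto r n (Set.univ : Set β)).ncard + (mapsOnto r n ({v}ᶜ : Set β)).ncard) := by
  refine (ncard_eq_sum_ncard_snoc _).trans (Finset.sum_congr rfl fun v _ => ?_)
  have hne : (Set.univ : Set β) ≠ {v}ᶜ := (Set.isCoatom_singleton_compl v).ne_top.symm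
  rw [← Set.ncard_union_eq (disjoint_mapsOnto hne)]
  exact congrArg Set.ncard (Set.ext fun g => snoc_mem_mapsOnto_univ)

theorem OS_succ (r n k : ℕ) : OS r (n + 1) k = (r + k) * adjacentSum (OS r n) k := by
  rw [OS_eq_ncard_mapsOnto, ncard_mapsOnto_succ_univ, ← OS_eq_ncard_mapsOnto]
  have hfiber (v : Fin (r + k)) :
      OS r n k + (mapsOnto r n ({v}ᶜ : Set (Fin (r + k)))).ncard = adjacentSum (OS r n) k := by
    cases k with
    | zero =>
      have hcard : ({v}ᶜ : Set (Fin r)).ncard < r := by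
        simpa using Set.ncard_lt_card (s := ({v}ᶜ : Set (Fin r))) (by simp)
      simp [mapsOnto_eq_empty_of_ncard_lt hcard, adjacentSum]
    | succ k => exact congrArg _ (ncard_mapsOnto_compl_singleton v)
  simp only [hfiber, Finset.sum_const, Finset.card_univ, Fintype.card_fin, smul_eq_mul]

end Recurrence

theorem OS_eq_zero_of_lt {r n k : ℕ} (h : n < k) : OS r n k = 0 := by
  refine Fintype.card_eq_zero_iff.2 ⟨fun ⟨f, hf, _⟩ => ?_⟩
  have hcard : r + k ≤ r + n := by simpa using Fintype.card_le_of_surjective f hf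
  omega

theorem OS_self_pos (r n : ℕ) : 0 < OS r n n :=
  Fintype.card_pos_iff.2 ⟨⟨id, Function.surjective_id, Fin.castAdd_injective r n⟩⟩

theorem OS_succ_pos (r : ℕ) {n k : ℕ} (h : k < n) : 0 < OS r n (k + 1) := by
  induction n, h using Nat.le_induction with
  | base => exact OS_self_pos r (k + 1)
  | succ n _ ih =>
    rw [OS_succ]
    exact Nat.mul_pos (by omega) (Nat.add_pos_left ih _)

theorem logConcave_OS (r n : ℕ) : LogConcave (OS r n) := by
  induction n with
  | zero =>
    intro i j _
    simp only [OS_eq_zero_of_lt j.succ_pos, mul_zero, Nat.zero_le]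
  | succ n ih =>
    have hOS : OS r (n + 1) = (fun k => r + k) * adjacentSum (OS r n) := funext (OS_succ r n)
    rw [hOS]
    exact (logConcave_const_add_natCast r).mul (ih.adjacentSum zero_le) zero_le zero_le

theorem ordered_rStirling_strict_log_concave_general (r : ℕ) {n k : ℕ} (h : k < n) :
    OS r n k * OS r n (k + 2) < OS r n (k + 1) ^ 2 := by
  obtain ⟨m, rfl⟩ := Nat.exists_eq_add_one_of_ne_zero h.ne_bot
  set s := adjacentSum (OS r m)
  have hs : s k * s (k + 2) ≤ s (k + 1) * s (k + 1) :=
    (logConcave_OS r m).adjacentSum zero_le k.le_succ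
  have hs_pos : 0 < s (k + 1) := Nat.pos_of_mul_pos_left (OS_succ r m (k + 1) ▸ OS_succ_pos r h)
  have hweight : (r + k) * (r + (k + 2)) < (r + (k + 1)) * (r + (k + 1)) := by nlinarith
  calc OS r (m + 1) k * OS r (m + 1) (k + 2)
      = (r + k) * (r + (k + 2)) * (s k * s (k + 2)) := by
        rw [OS_succ, OS_succ, mul_mul_mul_comm]
    _ < (r + (k + 1)) * (r + (k + 1)) * (s (k + 1) * s (k + 1)) :=
        Nat.mul_lt_mul_of_lt_of_le hweight hs (Nat.mul_pos hs_pos hs_pos)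
    _ = OS r (m + 1) (k + 1) ^ 2 := by rw [OS_succ, sq, mul_mul_mul_comm]

/-- The ordered `r`-Stirling numbers are strictly log-concave:
for `n ≥ 2` and `2 ≤ k ≤ n - 1` we have `OS_r(n,k)² > OS_r(n,k-1)·OS_r(n,k+1)`. -/
theorem ordered_rStirling_strict_log_concave
    (r n k : ℕ) (hn : 2 ≤ n) (hk : 2 ≤ k) (hkn : k ≤ n - 1) :
    OS r n (k - 1) * OS r n (k + 1) < OS r n k ^ 2 := by
  obtain ⟨j, rfl⟩ := Nat.exists_eq_add_of_le' (one_le_two.trans hk)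
  exact ordered_rStirling_strict_log_concave_general r (by omega)
end

section
/- For every fixed r ≥ 0, let M_{n,r} be the smallest k in {1, ..., n} maximizing OS_r(n,k). Then M_{n,r} is asymptotically n/(2 log 2): the ratio M_{n,r} / (n / (2 log 2)) tends to 1 as n → ∞. -/
open Polynomial

/-!
Sorting the maps `Fin (r + n) → Fin m` that are injective on the first `r` points by the size of
their image gives `m.descFactorial r * m ^ n = ∑ k, m.choose (r + k) * OS r n k`.

At `m ≈ n / log 2`, where `m ^ n / 2 ^ m` is largest, the bound `m.choose (r + k) ≤ 2 ^ m` shows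
that `∑ k, OS r n k` is at least `(n / (e * log 2)) ^ n / 2`. In the other direction, each term of
the identity is at most `m ^ (r + n)`; weighting by a geometric series in `m` gives
`OS r n k * exp (t * k) = O((n / (e * x)) ^ n)` whenever `0 < x < log (1 + exp (-t))`.

If `k` lies beyond `α * n` on the side to which `t` points, the two bounds make `OS r n k`
exponentially small relative to the sum as soon as `log 2 < log (1 + exp (-t)) * exp (α * t)`.
Equality holds at `t = 0`, where the right-hand side has derivative `α * log 2 - 1 / 2`, so a
small `t` of the right sign works for every `α ≠ 1 / (2 * log 2)`. A mode carries at least the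
average of the sum, so it cannot stay on the far side of any such `α * n`.
-/

open Finset Filter Real Topology

/-- The maps `Fin (r + n) → β` that are injective on the first `r` points: those counted by
`OS r n k`, without the condition on the image. -/
def initialInjections (r n : ℕ) (β : Type*) [Fintype β] [DecidableEq β] :
    Finset (Fin (r + n) → β) :=
  {f | Function.Injective fun i : Fin r => f (Fin.castAdd n i)}

section Counting

variable {r n k : ℕ} {β : Type*} [Fintype β] [DecidableEq β]

theorem mem_initialInjections {f : Fin (r + n) → β} :
    f ∈ initialInjections r n β ↔ Function.Injective fun i : Fin r => f (Fin.castAdd n i) := by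
  simp only [initialInjections, mem_filter_univ]

theorem card_initialInjections :
    #(initialInjections r n β) =
      (Fintype.card β).descFactorial r * Fintype.card β ^ n := by
  let e : {f : Fin (r + n) → β // Function.Injective fun i : Fin r => f (Fin.castAdd n i)} ≃
      (Fin r ↪ β) × (Fin n → β) :=
    ((Fin.appendEquiv r n).symm.subtypeEquiv fun _ => Iff.rfl).trans <|
      (Equiv.prodSubtypeFstEquivSubtypeProd
        (p := fun g : Fin r → β => Function.Injective g)).trans <|
      (Equiv.subtypeInjectiveEquivEmbedding (Fin r) β).prodCongr (Equiv.refl _)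
  rw [initialInjections, ← Fintype.card_subtype, Fintype.card_congr e]
  simp

theorem card_filter_image_eq {s : Finset β} (hs : #s = r + k) :
    #{f ∈ initialInjections r n β | univ.image f = s} = OS r n k := by
  let e : s ≃ Fin (r + k) := s.equivFinOfCardEq hs
  rw [OS, Fintype.card_subtype]
  symm
  refine card_bij (fun g _ i => (e.symm (g i) : β)) (fun g hg => ?_) (fun g _ g' _ h => ?_)
    fun f hf => ?_
  · obtain ⟨hsurj, hinj⟩ := mem_filter_univ _ |>.1 hg
    refine mem_filter.2 ⟨mem_initialInjections.2
      (Subtype.val_injective.comp (e.symm.injective.comp hinj)), ?_⟩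
    calc univ.image (fun i => (e.symm (g i) : β))
        = ((univ.image g).image e.symm).image Subtype.val := by
          rw [image_image, image_image]
          rfl
      _ = s := by
          rw [image_univ_of_surjective hsurj, image_univ_equiv, univ_eq_attach, attach_image_val]
  · funext i
    exact e.symm.injective (Subtype.ext (congrFun h i))
  · obtain ⟨hinj, himage⟩ := mem_filter.1 hf
    have hmem (i) : f i ∈ s := himage ▸ mem_image_of_mem f (mem_univ i)
    refine ⟨fun i => e ⟨f i, hmem i⟩, mem_filter_univ _ |>.2 ⟨fun b => ?_, fun i j hij => ?_⟩,
      by simp⟩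
    · obtain ⟨i, -, hi⟩ := mem_image.1 (himage.symm.subset (e.symm b).2)
      exact ⟨i, e.eq_symm_apply.1 (Subtype.ext hi)⟩
    · exact mem_initialInjections.1 hinj (Subtype.ext_iff.1 (e.injective hij))

theorem card_filter_card_image_eq :
    #{f ∈ initialInjections r n β | #(univ.image f) = r + k} =
      (Fintype.card β).choose (r + k) * OS r n k := by
  rw [card_eq_sum_card_fiberwise (f := fun f => univ.image f)
    (t := powersetCard (r + k) univ) fun f hf =>
      mem_powersetCard.2 ⟨subset_univ _, (mem_filter.1 hf).2⟩]
  have hfiber {s : Finset β} (hs : s ∈ powersetCard (r + k) univ) :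
      #{f ∈ {f ∈ initialInjections r n β | #(univ.image f) = r + k} | univ.image f = s} =
        OS r n k := by
    have hcard := (mem_powersetCard.1 hs).2
    rw [← card_filter_image_eq hcard, filter_filter]
    congr 2 with f
    exact and_iff_right_of_imp fun h => h ▸ hcard
  rw [sum_congr rfl fun s hs => hfiber hs, sum_const, card_powersetCard, card_univ, smul_eq_mul]

theorem le_card_image_of_mem_initialInjections {f : Fin (r + n) → β}
    (hf : f ∈ initialInjections r n β) : r ≤ #(univ.image f) := by
  simpa using card_le_card_of_injOn (s := univ) (fun i : Fin r => f (Fin.castAdd n i))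
    (by simp) (mem_initialInjections.1 hf).injOn

end Counting

theorem choose_mul_OS_le_pow (r n k m : ℕ) : m.choose (r + k) * OS r n k ≤ m ^ (r + n) := by
  calc m.choose (r + k) * OS r n k
      = #{f ∈ initialInjections r n (Fin m) | #(univ.image f) = r + k} := by
        rw [card_filter_card_image_eq, Fintype.card_fin]
    _ ≤ #(univ : Finset (Fin (r + n) → Fin m)) := card_le_univ _
    _ = m ^ (r + n) := by simp

theorem descFactorial_mul_pow_eq_sum_choose_mul_OS (r n m : ℕ) :
    m.descFactorial r * m ^ n = ∑ k ∈ range (n + 1), m.choose (r + k) * OS r n k := by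
  have hmaps : ∀ f ∈ initialInjections r n (Fin m), #(univ.image f) - r ∈ range (n + 1) := by
    intro f _
    have : #(univ.image f) ≤ r + n := by simpa using card_image_le (s := univ) (f := f)
    rw [mem_range]
    lia
  have hcard := card_initialInjections (r := r) (n := n) (β := Fin m)
  rw [Fintype.card_fin] at hcard
  rw [← hcard, card_eq_sum_card_fiberwise hmaps]
  refine sum_congr rfl fun k _ => ?_
  have hfiber := card_filter_card_image_eq (r := r) (n := n) (k := k) (β := Fin m)
  rw [Fintype.card_fin] at hfiber
  rw [← hfiber]
  refine congrArg card (filter_congr fun f hf => ?_)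
  have := le_card_image_of_mem_initialInjections hf
  lia

/-- The `r`-Fubini number, the total of the `OS r n k`. Unlike `rFubiniPoly`, it includes the
term `k = 0` for every `n`. -/
def rFubini (r n : ℕ) : ℕ :=
  ∑ k ∈ range (n + 1), OS r n k

theorem pow_le_two_pow_mul_rFubini {r m : ℕ} (hm : r ≤ m) (n : ℕ) :
    m ^ n ≤ 2 ^ m * rFubini r n := by
  calc m ^ n ≤ m.descFactorial r * m ^ n :=
        Nat.le_mul_of_pos_left _ (Nat.descFactorial_pos.2 hm)
    _ = ∑ k ∈ range (n + 1), m.choose (r + k) * OS r n k :=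
        descFactorial_mul_pow_eq_sum_choose_mul_OS r n m
    _ ≤ ∑ k ∈ range (n + 1), 2 ^ m * OS r n k := by
        gcongr
        exact Nat.choose_le_two_pow _ _
    _ = 2 ^ m * rFubini r n := (mul_sum ..).symm

theorem rFubini_pos (r n : ℕ) : 0 < rFubini r n := by
  have hpow : 0 < 2 ^ (r + 1) * rFubini r n :=
    (pow_pos r.succ_pos n).trans_le (pow_le_two_pow_mul_rFubini r.le_succ n)
  exact Nat.pos_of_mul_pos_left hpow

theorem half_div_exp_mul_log_two_pow_le_rFubini {r n : ℕ} (hn : r ≤ n) :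
    (n / (exp 1 * log 2)) ^ n / 2 ≤ (rFubini r n : ℝ) := by
  -- `m ↦ m ^ n / 2 ^ m` peaks at `n / log 2`.
  let m := ⌈n / log 2⌉₊
  have hle : n / log 2 ≤ m := Nat.le_ceil _
  have hnm : n ≤ m := by
    have hlog1 : log 2 ≤ 1 := by linarith [log_two_lt_d9]
    exact_mod_cast (le_div_self n.cast_nonneg (by positivity) hlog1).trans hle
  have hpow : (2 : ℝ) ^ m ≤ 2 * exp 1 ^ n := by
    have hm : m * log 2 ≤ log 2 + n * 1 := by
      calc m * log 2 ≤ (n / log 2 + 1) * log 2 := by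
            gcongr
            exact (Nat.ceil_lt_add_one (by positivity)).le
        _ = log 2 + n * 1 := by field_simp; ring
    calc (2 : ℝ) ^ m = exp (m * log 2) := by rw [exp_nat_mul, exp_log two_pos]
      _ ≤ exp (log 2 + n * 1) := exp_le_exp.2 hm
      _ = 2 * exp 1 ^ n := by rw [exp_add, exp_log two_pos, exp_nat_mul]
  have hbound : (n / log 2) ^ n ≤ 2 * exp 1 ^ n * rFubini r n := by
    calc (n / log 2) ^ n ≤ (m : ℝ) ^ n := by gcongr
      _ ≤ 2 ^ m * rFubini r n := by exact_mod_cast pow_le_two_pow_mul_rFubini (hn.trans hnm) n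
      _ ≤ 2 * exp 1 ^ n * rFubini r n := by gcongr
  calc (n / (exp 1 * log 2)) ^ n / 2 = (n / log 2) ^ n / (2 * exp 1 ^ n) := by
        rw [mul_comm (exp 1), ← div_div, div_pow (_ / _), div_div, mul_comm 2]
    _ ≤ rFubini r n := by
        rw [div_le_iff₀ (by positivity)]
        linarith

theorem pow_le_div_exp_pow_mul_exp {u : ℝ} (hu : 0 ≤ u) (n : ℕ) :
    u ^ n ≤ (n / exp 1) ^ n * exp u := by
  rcases n.eq_zero_or_pos with rfl | hn
  · simpa using one_le_exp hu
  have hn' : (0 : ℝ) < n := by exact_mod_cast hn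
  have hbase : u ≤ n / exp 1 * exp (u / n) := by
    have h := add_one_le_exp (u / n - 1)
    rw [exp_sub, sub_add_cancel, div_le_iff₀ hn'] at h
    exact h.trans_eq (by ring)
  calc u ^ n ≤ (n / exp 1 * exp (u / n)) ^ n := by gcongr
    _ = (n / exp 1) ^ n * exp u := by
      rw [mul_pow, ← exp_nat_mul, mul_div_cancel₀ u hn'.ne']

theorem hasSum_choose_mul_div_one_add_pow (k : ℕ) {y : ℝ} (hy : 0 ≤ y) :
    HasSum (fun m : ℕ => m.choose k * (y / (1 + y)) ^ m) (y ^ k * (1 + y)) := by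
  have hy1 : 0 < 1 + y := by positivity
  have hnorm : ‖y / (1 + y)‖ < 1 := by
    rw [norm_of_nonneg (by positivity), div_lt_one hy1]
    linarith
  have hone_sub : 1 - y / (1 + y) = (1 + y)⁻¹ := by field_simp; ring
  have hzero : ∀ m ∉ Set.range (· + k), (m.choose k : ℝ) * (y / (1 + y)) ^ m = 0 := by
    intro m hm
    have : m < k := by
      by_contra! h
      exact hm ⟨m - k, Nat.sub_add_cancel h⟩
    simp [Nat.choose_eq_zero_of_lt this]
  rw [← (add_left_injective k).hasSum_iff hzero]
  convert! (hasSum_choose_mul_geometric_of_norm_lt_one k hnorm).mul_left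
    ((y / (1 + y)) ^ k) using 1
  · ext j
    rw [Function.comp_apply, pow_add]
    ring
  · rw [hone_sub, inv_pow, one_div, inv_inv, div_pow, pow_succ]
    field_simp

theorem choose_mul_OS_mul_pow_le (r n k m : ℕ) {x q : ℝ} (hx : 0 < x) (hq : 0 ≤ q) :
    m.choose (r + k) * OS r n k * q ^ m ≤
      (n / (exp 1 * x)) ^ n * (m ^ r * (exp x * q) ^ m) := by
  have hpow : (m : ℝ) ^ n ≤ (n / (exp 1 * x)) ^ n * exp x ^ m := by
    calc (m : ℝ) ^ n = (m * x) ^ n / x ^ n := by rw [← div_pow, mul_div_cancel_right₀ _ hx.ne']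
      _ ≤ (n / exp 1) ^ n * exp (m * x) / x ^ n := by
          gcongr
          exact pow_le_div_exp_pow_mul_exp (by positivity) n
      _ = (n / (exp 1 * x)) ^ n * exp x ^ m := by
          rw [exp_nat_mul, ← div_div, div_pow _ x]
          ring
  calc m.choose (r + k) * OS r n k * q ^ m ≤ (m : ℝ) ^ (r + n) * q ^ m := by
        gcongr
        exact_mod_cast choose_mul_OS_le_pow r n k m
    _ = m ^ r * (m : ℝ) ^ n * q ^ m := by rw [pow_add]
    _ ≤ m ^ r * ((n / (exp 1 * x)) ^ n * exp x ^ m) * q ^ m := by gcongr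
    _ = (n / (exp 1 * x)) ^ n * (m ^ r * (exp x * q) ^ m) := by
        rw [mul_pow]
        ring

/-- The condition on `x` and `y` keeps `x` below the pole of the generating function
`∑ n, ∑ k, OS r n k * y ^ k * x ^ n / n ! = r ! * exp (r * x) / (1 - (exp x - 1) * y) ^ (r + 1)`. -/
theorem exists_forall_OS_mul_pow_le (r : ℕ) {x y : ℝ} (hx : 0 < x) (hy : 0 < y)
    (hxy : (exp x - 1) * y < 1) :
    ∃ C : ℝ, ∀ n k : ℕ, OS r n k * y ^ k ≤ C * (n / (exp 1 * x)) ^ n := by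
  let q := y / (1 + y)
  have hq : 0 ≤ q := by positivity
  have hxq : exp x * q < 1 := by
    rw [mul_div_assoc', div_lt_one (by positivity)]
    linarith
  have hsum : Summable fun m : ℕ => (m : ℝ) ^ r * (exp x * q) ^ m :=
    summable_pow_mul_geometric_of_norm_lt_one r (by rwa [norm_of_nonneg (by positivity)])
  let D := ∑' m : ℕ, (m : ℝ) ^ r * (exp x * q) ^ m
  refine ⟨D / (y ^ r * (1 + y)), fun n k => ?_⟩
  have hle : OS r n k * (y ^ (r + k) * (1 + y)) ≤ (n / (exp 1 * x)) ^ n * D :=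
    hasSum_le
      (fun m => by
        rw [← mul_assoc, mul_comm (OS r n k : ℝ)]
        exact choose_mul_OS_mul_pow_le r n k m hx hq)
      ((hasSum_choose_mul_div_one_add_pow (r + k) hy.le).mul_left _)
      (hsum.hasSum.mul_left _)
  rw [div_mul_eq_mul_div, le_div_iff₀ (by positivity)]
  calc OS r n k * y ^ k * (y ^ r * (1 + y)) = OS r n k * (y ^ (r + k) * (1 + y)) := by ring
    _ ≤ D * (n / (exp 1 * x)) ^ n := by rwa [mul_comm D]

theorem exists_forall_OS_mul_pow_le_mul_rFubini (r : ℕ) {x y : ℝ} (hx : 0 < x) (hy : 0 < y)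
    (hxy : (exp x - 1) * y < 1) :
    ∃ C : ℝ, ∀ n k : ℕ, r ≤ n → OS r n k * y ^ k ≤ C * (log 2 / x) ^ n * rFubini r n := by
  obtain ⟨C, hC⟩ := exists_forall_OS_mul_pow_le r hx hy hxy
  have hC0 : 0 ≤ C := (Nat.cast_nonneg (OS r 0 0)).trans (by simpa using hC 0 0)
  refine ⟨2 * C, fun n k hn => ?_⟩
  calc OS r n k * y ^ k ≤ C * (n / (exp 1 * x)) ^ n := hC n k
    _ = 2 * C * (log 2 / x) ^ n * ((n / (exp 1 * log 2)) ^ n / 2) := by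
        have : n / (exp 1 * x) = log 2 / x * (n / (exp 1 * log 2)) := by field_simp
        rw [this, mul_pow]
        ring
    _ ≤ 2 * C * (log 2 / x) ^ n * rFubini r n := by
        gcongr
        exact half_div_exp_mul_log_two_pow_le_rFubini hn

theorem exists_mul_pos_and_lt_of_hasDerivAt {f : ℝ → ℝ} {f' a : ℝ} (hf : HasDerivAt f f' a)
    (hf' : f' ≠ 0) : ∃ t : ℝ, 0 < t * f' ∧ f a < f (a + t) := by
  have hline : HasDerivAt (fun u => f (a + u * f')) (f' * f') 0 := by
    refine HasDerivAt.comp 0 (by simpa using hf) ?_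
    simpa using ((hasDerivAt_id (0 : ℝ)).mul_const f').const_add a
  have hpos : 0 < f' * f' := mul_self_pos.2 hf'
  obtain ⟨u, hslope, hu : 0 < u⟩ :=
    (((hasDerivAt_iff_tendsto_slope.1 hline).eventually_const_lt hpos).filter_mono
      (nhdsGT_le_nhdsNE 0)).and self_mem_nhdsWithin |>.exists
  refine ⟨u * f', by rw [mul_assoc]; positivity, ?_⟩
  rw [slope_def_field, sub_zero, div_pos_iff_of_pos_right hu, sub_pos] at hslope
  simpa using hslope

theorem hasDerivAt_log_one_add_exp_neg_mul_exp (α : ℝ) :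
    HasDerivAt (fun t => log (1 + exp (-t)) * exp (α * t)) (α * log 2 - 1 / 2) 0 := by
  have hlog : HasDerivAt (fun t : ℝ => log (1 + exp (-t))) (-1 / 2) 0 :=
    ((hasDerivAt_neg (0 : ℝ)).exp.const_add 1).log (by positivity) |>.congr_deriv (by norm_num)
  have hexp : HasDerivAt (fun t => exp (α * t)) α 0 :=
    ((hasDerivAt_id (0 : ℝ)).const_mul α).exp.congr_deriv (by simp)
  refine (hlog.mul hexp).congr_deriv ?_
  norm_num
  ring

theorem exists_log_two_lt_log_one_add_exp_neg_mul_exp {α : ℝ} (hα : α ≠ 1 / (2 * log 2)) :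
    ∃ t : ℝ, 0 < t * (α - 1 / (2 * log 2)) ∧ log 2 < log (1 + exp (-t)) * exp (α * t) := by
  have hderiv : α * log 2 - 1 / 2 = (α - 1 / (2 * log 2)) * log 2 := by field_simp
  obtain ⟨t, ht, hlt⟩ := exists_mul_pos_and_lt_of_hasDerivAt
    (hasDerivAt_log_one_add_exp_neg_mul_exp α)
    (hderiv ▸ mul_ne_zero (sub_ne_zero.2 hα) (by positivity))
  rw [hderiv, ← mul_assoc] at ht
  refine ⟨t, pos_of_mul_pos_left ht (by positivity), ?_⟩
  norm_num at hlt
  exact hlt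

theorem exists_forall_OS_le_mul_pow_mul_rFubini (r : ℕ) {t α : ℝ}
    (ht : log 2 < log (1 + exp (-t)) * exp (α * t)) :
    ∃ C ρ : ℝ, 0 ≤ ρ ∧ ρ < 1 ∧
      ∀ n k : ℕ, r ≤ n → t * (α * n) ≤ t * k → OS r n k ≤ C * ρ ^ n * rFubini r n := by
  obtain ⟨x, hαx, hxt⟩ := exists_between ((div_lt_iff₀ (exp_pos (α * t))).2 ht)
  have hx : 0 < x := lt_trans (by positivity) hαx
  have hxy : (exp x - 1) * exp t < 1 := by
    have h : exp x < 1 + exp (-t) := (lt_log_iff_exp_lt (by positivity)).1 hxt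
    calc (exp x - 1) * exp t < exp (-t) * exp t := by gcongr; linarith
      _ = 1 := by rw [← exp_add, neg_add_cancel, exp_zero]
  obtain ⟨C, hC⟩ := exists_forall_OS_mul_pow_le_mul_rFubini r hx (exp_pos t) hxy
  refine ⟨C, log 2 / x / exp (α * t), by positivity, ?_, fun n k hn hk => ?_⟩
  · rwa [div_lt_one (exp_pos _), div_lt_comm₀ hx (exp_pos _)]
  have hexp : exp (α * t) ^ n ≤ exp t ^ k := by
    rw [← exp_nat_mul, ← exp_nat_mul, exp_le_exp]
    linarith
  rw [div_pow (log 2 / x), mul_div_assoc', div_mul_eq_mul_div, le_div_iff₀ (by positivity)]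
  calc OS r n k * exp (α * t) ^ n ≤ OS r n k * exp t ^ k := by gcongr
    _ ≤ C * (log 2 / x) ^ n * rFubini r n := hC n k hn

theorem eventually_forall_mul_OS_lt_rFubini (r : ℕ) {t α : ℝ}
    (ht : log 2 < log (1 + exp (-t)) * exp (α * t)) :
    ∀ᶠ n : ℕ in atTop, ∀ k : ℕ, t * (α * n) ≤ t * k → (n + 1) * OS r n k < rFubini r n := by
  obtain ⟨C, ρ, hρ0, hρ1, hOS⟩ := exists_forall_OS_le_mul_pow_mul_rFubini r ht
  have hlim : Tendsto (fun n : ℕ => (n * ρ ^ n + ρ ^ n) * C) atTop (𝓝 0) := by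
    simpa using ((tendsto_self_mul_const_pow_of_lt_one hρ0 hρ1).add
      (tendsto_pow_atTop_nhds_zero_of_lt_one hρ0 hρ1)).mul_const C
  filter_upwards [hlim.eventually_lt_const one_pos, eventually_ge_atTop r] with n hn hrn k hk
  have hF : 0 < (rFubini r n : ℝ) := by exact_mod_cast rFubini_pos r n
  have hreal : (n + 1) * OS r n k < (rFubini r n : ℝ) := by
    calc (n + 1) * (OS r n k : ℝ) ≤ (n + 1) * (C * ρ ^ n * rFubini r n) := by
          gcongr
          exact hOS n k hrn hk
      _ = (n * ρ ^ n + ρ ^ n) * C * rFubini r n := by ring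
      _ < rFubini r n := mul_lt_of_lt_one_left hF hn
  exact_mod_cast hreal

theorem eventually_forall_mul_lt_of_rFubini_le (r : ℕ) {α : ℝ} (hα : α < 1 / (2 * log 2)) :
    ∀ᶠ n : ℕ in atTop, ∀ k : ℕ, rFubini r n ≤ (n + 1) * OS r n k → α * n < k := by
  obtain ⟨t, ht, hlt⟩ := exists_log_two_lt_log_one_add_exp_neg_mul_exp hα.ne
  have ht0 : t < 0 := neg_of_mul_pos_left ht (sub_neg.2 hα).le
  filter_upwards [eventually_forall_mul_OS_lt_rFubini r hlt] with n hn k hk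
  contrapose! hk
  exact hn k (mul_le_mul_of_nonpos_left hk ht0.le)

theorem eventually_forall_lt_mul_of_rFubini_le (r : ℕ) {α : ℝ} (hα : 1 / (2 * log 2) < α) :
    ∀ᶠ n : ℕ in atTop, ∀ k : ℕ, rFubini r n ≤ (n + 1) * OS r n k → k < α * n := by
  obtain ⟨t, ht, hlt⟩ := exists_log_two_lt_log_one_add_exp_neg_mul_exp hα.ne'
  have ht0 : 0 < t := pos_of_mul_pos_left ht (sub_pos.2 hα).le
  filter_upwards [eventually_forall_mul_OS_lt_rFubini r hlt] with n hn k hk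
  contrapose! hk
  exact hn k (mul_le_mul_of_nonneg_left hk ht0.le)

theorem tendsto_div_of_rFubini_le {r : ℕ} {M : ℕ → ℕ}
    (hM : ∀ᶠ n in atTop, rFubini r n ≤ (n + 1) * OS r n (M n)) :
    Tendsto (fun n : ℕ => (M n : ℝ) / n) atTop (𝓝 (1 / (2 * log 2))) := by
  refine tendsto_order.2 ⟨fun α hα => ?_, fun α hα => ?_⟩
  · filter_upwards [hM, eventually_forall_mul_lt_of_rFubini_le r hα, eventually_gt_atTop 0]
      with n hn hlt hn0
    rw [lt_div_iff₀ (by exact_mod_cast hn0)]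
    exact hlt _ hn
  · filter_upwards [hM, eventually_forall_lt_mul_of_rFubini_le r hα, eventually_gt_atTop 0]
      with n hn hlt hn0
    rw [div_lt_iff₀ (by exact_mod_cast hn0)]
    exact hlt _ hn

theorem exists_rFubini_le_mul_OS (r n : ℕ) :
    ∃ k ∈ range (n + 1), rFubini r n ≤ (n + 1) * OS r n k :=
  exists_le_of_sum_le nonempty_range_add_one <| by simp [rFubini, mul_sum]

theorem eventually_rFubini_le_of_forall_OS_le {r : ℕ} {M : ℕ → ℕ}
    (hM : ∀ᶠ n in atTop, ∀ k ∈ Icc 1 n, OS r n k ≤ OS r n (M n)) :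
    ∀ᶠ n in atTop, rFubini r n ≤ (n + 1) * OS r n (M n) := by
  have hκ : 0 < 1 / (2 * log 2) := by positivity
  filter_upwards [hM, eventually_forall_mul_lt_of_rFubini_le r hκ] with n hmax hpos
  obtain ⟨k, hkn, hk⟩ := exists_rFubini_le_mul_OS r n
  have hk0 : 0 < k := by simpa using hpos k hk
  have hkM : OS r n k ≤ OS r n (M n) :=
    hmax k (mem_Icc.2 ⟨hk0, Nat.lt_succ_iff.1 (mem_range.1 hkn)⟩)
  exact hk.trans (by gcongr)

theorem mode_ordered_rStirling_asymptotic_general (r : ℕ) (M : ℕ → ℕ)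
    (hmax : ∀ᶠ n in atTop, ∀ k ∈ Icc 1 n, OS r n k ≤ OS r n (M n)) :
    Tendsto (fun n : ℕ => (M n : ℝ) / (n / (2 * log 2))) atTop (𝓝 1) := by
  have hlim := (tendsto_div_of_rFubini_le
    (eventually_rFubini_le_of_forall_OS_le hmax)).mul_const (2 * log 2)
  rw [one_div_mul_cancel (by positivity)] at hlim
  exact hlim.congr fun n => by rw [div_div_eq_mul_div, div_mul_eq_mul_div]

/-- For fixed `r`, the smallest mode `M_{n,r}` of the sequence
`OS_r(n,1), …, OS_r(n,n)` satisfies `M_{n,r} ∼ n/(2 log 2)` as `n → ∞`. -/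
theorem mode_ordered_rStirling_asymptotic
    (r : ℕ) (M : ℕ → ℕ)
    (hmem : ∀ n, 1 ≤ n → M n ∈ Finset.Icc 1 n)
    (hmax : ∀ n, 1 ≤ n → ∀ k ∈ Finset.Icc 1 n, OS r n k ≤ OS r n (M n))
    (hmin : ∀ n, 1 ≤ n → ∀ k ∈ Finset.Icc 1 n,
      (∀ j ∈ Finset.Icc 1 n, OS r n j ≤ OS r n k) → M n ≤ k) :
    Filter.Tendsto (fun n : ℕ => (M n : ℝ) / ((n : ℝ) / (2 * Real.log 2)))
      Filter.atTop (nhds 1) :=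
  mode_ordered_rStirling_asymptotic_general r M (eventually_atTop.2 ⟨1, hmax⟩)
end
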